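/- Let B ⊆ ℝⁿ be the open ball of radius r centered at 0, and let h : B̄ → ℝⁿ be continuous with ⟨h(x), x⟩ > 0 for all x ∈ B̄ \ {0}. If γ : [0,∞) → B is a differentiable curve satisfying γ′(t) = −h(γ(t)) for all t ≥ 0, then lim_{t→∞} γ(t) = 0. -/

import Mathlib

open Set Filter Metric
open scoped Topology

/-- The Lyapunov function `‖x‖²` forces forward convergence to the singularity:
if `h` is continuous on the closed ball `B̄(0,r)` with `⟨h(x), x⟩ > 0` for
`x ∈ B̄ \ {0}`, and `γ : [0,∞) → B(0,r)` solves `γ′ = -h(γ)`, then `γ(t) → 0`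
as `t → ∞`. -/
theorem stmt_9 (n : ℕ) (r : ℝ) (hr : 0 < r)
    (h : EuclideanSpace ℝ (Fin n) → EuclideanSpace ℝ (Fin n))
    (hh : ContinuousOn h (closedBall 0 r))
    (hinner : ∀ x ∈ closedBall (0 : EuclideanSpace ℝ (Fin n)) r, x ≠ 0 →
      0 < (inner ℝ (h x) x : ℝ))
    (γ : ℝ → EuclideanSpace ℝ (Fin n))
    (hγB : ∀ t : ℝ, 0 ≤ t → γ t ∈ ball (0 : EuclideanSpace ℝ (Fin n)) r)
    (hγ' : ∀ t : ℝ, 0 ≤ t → HasDerivAt γ (-h (γ t)) t) :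
    Tendsto γ atTop (𝓝 0) := by
  have hV : ∀ t : ℝ, 0 ≤ t →
      HasDerivAt (fun t => ‖γ t‖ ^ 2) (-(2 * inner ℝ (h (γ t)) (γ t))) t := by
    intro t ht
    have h1 := (hγ' t ht).norm_sq
    rw [inner_neg_right, real_inner_comm] at h1
    convert h1 using 1
    ring
  have key : ∀ c : ℝ, (∀ t : ℝ, 0 ≤ t → c ≤ inner ℝ (h (γ t)) (γ t)) →
      AntitoneOn (fun t => ‖γ t‖ ^ 2 + 2 * c * t) (Ici 0) := by
    intro c hc
    have hd : ∀ t : ℝ, 0 ≤ t → HasDerivAt (fun t => ‖γ t‖ ^ 2 + 2 * c * t)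
        (-(2 * inner ℝ (h (γ t)) (γ t)) + 2 * c * 1) t := fun t ht =>
      (hV t ht).add ((hasDerivAt_id t).const_mul (2 * c))
    refine antitoneOn_of_deriv_nonpos (convex_Ici 0)
      (fun t ht => (hd t ht).continuousAt.continuousWithinAt) ?_ ?_
    · intro t ht
      exact (hd t (interior_subset ht)).differentiableAt.differentiableWithinAt
    · intro t ht
      rw [(hd t (interior_subset ht)).deriv]
      have := hc t (interior_subset ht)
      linarith
  have hanti : ∀ s t : ℝ, 0 ≤ s → s ≤ t → ‖γ t‖ ≤ ‖γ s‖ := by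
    intro s t hs hst
    have h0 := key 0 (by
      intro u hu
      by_cases hz : γ u = 0
      · simp [hz]
      · exact (hinner _ (ball_subset_closedBall (hγB u hu)) hz).le)
      (mem_Ici.2 hs) (mem_Ici.2 (hs.trans hst)) hst
    simp only [mul_zero, zero_mul, add_zero] at h0
    exact (sq_le_sq₀ (norm_nonneg _) (norm_nonneg _)).1 h0
  rw [Metric.tendsto_atTop]
  intro ε hε
  suffices hex : ∃ t : ℝ, 0 ≤ t ∧ ‖γ t‖ < ε by
    obtain ⟨s, hs, hsε⟩ := hex
    refine ⟨s, fun t ht => ?_⟩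
    rw [dist_zero_right]
    exact (hanti s t hs ht).trans_lt hsε
  by_contra! hne
  have hKc : IsCompact (closedBall (0 : EuclideanSpace ℝ (Fin n)) r \ ball 0 ε) :=
    (isCompact_closedBall _ _).diff isOpen_ball
  have hmem : ∀ t : ℝ, 0 ≤ t →
      γ t ∈ closedBall (0 : EuclideanSpace ℝ (Fin n)) r \ ball 0 ε := by
    intro t ht
    refine ⟨ball_subset_closedBall (hγB t ht), ?_⟩
    rw [mem_ball_zero_iff]
    exact not_lt.2 (hne t ht)
  have hcont : ContinuousOn (fun x => (inner ℝ (h x) x : ℝ))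
      (closedBall (0 : EuclideanSpace ℝ (Fin n)) r \ ball 0 ε) :=
    ContinuousOn.inner (hh.mono sdiff_subset) continuousOn_id
  obtain ⟨x, hx, hmin⟩ := hKc.exists_isMinOn ⟨_, hmem 0 le_rfl⟩ hcont
  have hx0 : x ≠ 0 := by
    rintro rfl
    exact hx.2 (mem_ball_self hε)
  have hc := hinner x hx.1 hx0
  set c : ℝ := inner ℝ (h x) x with hcdef
  have hA := key c (fun t ht => hmin (hmem t ht))
  have hT : 0 ≤ (‖γ 0‖ ^ 2 + 1) / (2 * c) := by positivity
  have h1 := hA (mem_Ici.2 le_rfl) (mem_Ici.2 hT) hT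
  have h2 : 2 * c * ((‖γ 0‖ ^ 2 + 1) / (2 * c)) = ‖γ 0‖ ^ 2 + 1 := by
    field_simp
  simp only [h2, mul_zero, add_zero] at h1
  have h3 := sq_nonneg ‖γ ((‖γ 0‖ ^ 2 + 1) / (2 * c))‖
  linarith
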